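/- Let n ≥ 2 and K ⊆ J ⊆ [n-1]. For g ∈ SL_n(ℂ), the following are equivalent: (a) (g^{-1} f g)_{i,j} = 0 for all j > i+1, g ∈ B^+ ẇ_K B^-, and g ∈ B^- ẇ_J B^-; (b) there exist a J-Toeplitz matrix x ∈ SL_n(ℂ) and b ∈ B^- such that g = x ẇ_J b, Δ_i(x ẇ_J) = 0 for all i ∈ K, and Δ_i(x ẇ_J) ≠ 0 for all i ∈ [n-1] − K. -/

import Mathlib

open Matrix

attribute [local instance] Classical.propDecidable

noncomputable section

namespace PetersonPaper

/-- Zero above the diagonal: `M i j = 0` whenever `i < j` (lower triangular). -/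
def lowerTri (n : ℕ) (M : Matrix (Fin n) (Fin n) ℂ) : Prop :=
  ∀ i j : Fin n, i < j → M i j = 0

/-- Zero below the diagonal: `M i j = 0` whenever `j < i` (upper triangular). -/
def upperTri (n : ℕ) (M : Matrix (Fin n) (Fin n) ℂ) : Prop :=
  ∀ i j : Fin n, j < i → M i j = 0

/-- The regular nilpotent matrix `f`, with `(i,j)` entry `1` iff `i = j+1`. -/
def fMat (n : ℕ) : Matrix (Fin n) (Fin n) ℂ :=
  fun i j => if (i : ℕ) = (j : ℕ) + 1 then 1 else 0

/-- `Δ_i(g)`: the lower-right `(n-i)×(n-i)` minor of `g`.  Here `i : Fin (n-1)`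
encodes the (1-based) index `i.1 + 1 ∈ {1,…,n-1}`. -/
def Delta (n : ℕ) (g : Matrix (Fin n) (Fin n) ℂ) (i : Fin (n-1)) : ℂ :=
  (g.submatrix
    (fun k : Fin (n - (i.1 + 1)) => (⟨k.1 + (i.1 + 1), by have := k.isLt; omega⟩ : Fin n))
    (fun k : Fin (n - (i.1 + 1)) => (⟨k.1 + (i.1 + 1), by have := k.isLt; omega⟩ : Fin n))).det

/-- `q_i(g) = -(g⁻¹ f g)_{i,i+1}` (1-based indices; `i : Fin (n-1)` encodes `i.1+1`). -/
def qfun (n : ℕ) (g : Matrix (Fin n) (Fin n) ℂ) (i : Fin (n-1)) : ℂ :=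
  -((g⁻¹ * fMat n * g) (⟨i.1, by have := i.isLt; omega⟩ : Fin n)
      (⟨i.1 + 1, by have := i.isLt; omega⟩ : Fin n))

/-- The (0-based) gap `c` (between positions `c` and `c+1` of `Fin n`) belongs to
`J ⊆ [n-1]`; `c` encodes the 1-based element `c+1` of `[n-1]`. -/
def gapMem (n : ℕ) (J : Set (Fin (n-1))) (c : ℕ) : Prop :=
  ∃ h : c < n - 1, (⟨c, h⟩ : Fin (n-1)) ∈ J

/-- The (0-based) first position of the block of the partition of `{0,…,n-1}`
determined by `J` containing the position `p`. -/
def blockStart (n : ℕ) (J : Set (Fin (n-1))) (p : Fin n) : ℕ :=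
  sInf {a : ℕ | a ≤ p.1 ∧ ∀ c : ℕ, a ≤ c → c < p.1 → gapMem n J c}

/-- The (0-based) last position of the block of the partition of `{0,…,n-1}`
determined by `J` containing the position `p`. -/
def blockEnd (n : ℕ) (J : Set (Fin (n-1))) (p : Fin n) : ℕ :=
  sSup {b : ℕ | b < n ∧ p.1 ≤ b ∧ ∀ c : ℕ, p.1 ≤ c → c < b → gapMem n J c}

lemma blockStart_le (n : ℕ) (J : Set (Fin (n-1))) (p : Fin n) : blockStart n J p ≤ p.1 :=
  Nat.sInf_le ⟨le_refl _, fun c hc1 hc2 => absurd (lt_of_le_of_lt hc1 hc2) (lt_irrefl _)⟩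

lemma blockEnd_mem (n : ℕ) (J : Set (Fin (n-1))) (p : Fin n) :
    blockEnd n J p ∈ {b : ℕ | b < n ∧ p.1 ≤ b ∧ ∀ c : ℕ, p.1 ≤ c → c < b → gapMem n J c} :=
  Nat.sSup_mem
    ⟨p.1, p.isLt, le_refl _, fun c hc1 hc2 => absurd (lt_of_le_of_lt hc1 hc2) (lt_irrefl _)⟩
    ⟨n, fun _ hb => le_of_lt hb.1⟩

lemma blockEnd_lt (n : ℕ) (J : Set (Fin (n-1))) (p : Fin n) : blockEnd n J p < n :=
  (blockEnd_mem n J p).1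

lemma le_blockEnd (n : ℕ) (J : Set (Fin (n-1))) (p : Fin n) : p.1 ≤ blockEnd n J p :=
  (blockEnd_mem n J p).2.1

/-- The representative `ẇ_J` of the longest element of the Young subgroup determined
by `J ⊆ [n-1]`: block diagonal, with the antidiagonal matrix with entries
`(-1)^(row - blockStart)` on each block of the partition determined by `J`. -/
def wJ (n : ℕ) (J : Set (Fin (n-1))) : Matrix (Fin n) (Fin n) ℂ :=
  fun p q =>
    if (p : ℕ) + (q : ℕ) = blockStart n J p + blockEnd n J p
    then (-1 : ℂ) ^ ((p : ℕ) - blockStart n J p) else 0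

/-- A `J`-Toeplitz matrix: block diagonal with respect to the partition determined by
`J`, each block being lower triangular Toeplitz with `1`'s on the diagonal. -/
def IsJToeplitz (n : ℕ) (J : Set (Fin (n-1))) (x : Matrix (Fin n) (Fin n) ℂ) : Prop :=
  ∃ c : ℕ → ℕ → ℂ, (∀ a, c a 0 = 1) ∧
    ∀ p q : Fin n, x p q =
      if blockStart n J p = blockStart n J q ∧ (q : ℕ) ≤ (p : ℕ)
      then c (blockStart n J p) ((p : ℕ) - (q : ℕ)) else 0

/-- `g ∈ B⁺ ẇ_K B⁻` (at the level of matrices of determinant 1). -/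
def inBruhatPlus (n : ℕ) (K : Set (Fin (n-1))) (g : Matrix (Fin n) (Fin n) ℂ) : Prop :=
  ∃ b₁ b₂ : Matrix (Fin n) (Fin n) ℂ,
    b₁.det = 1 ∧ b₂.det = 1 ∧ upperTri n b₁ ∧ lowerTri n b₂ ∧ g = b₁ * wJ n K * b₂

/-- `g ∈ B⁻ ẇ_J B⁻` (at the level of matrices of determinant 1). -/
def inBruhatMinus (n : ℕ) (J : Set (Fin (n-1))) (g : Matrix (Fin n) (Fin n) ℂ) : Prop :=
  ∃ b₁ b₂ : Matrix (Fin n) (Fin n) ℂ,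
    b₁.det = 1 ∧ b₂.det = 1 ∧ lowerTri n b₁ ∧ lowerTri n b₂ ∧ g = b₁ * wJ n J * b₂

section blocks
variable {n : ℕ} {J : Set (Fin (n-1))}

lemma bs_gap (p : Fin n) (c : ℕ) (h1 : blockStart n J p ≤ c) (h2 : c < p.1) : gapMem n J c := by
  have := Nat.sInf_mem (s := {a : ℕ | a ≤ p.1 ∧ ∀ c : ℕ, a ≤ c → c < p.1 → gapMem n J c})
    ⟨p.1, le_refl _, fun c hc1 hc2 => absurd (lt_of_le_of_lt hc1 hc2) (lt_irrefl _)⟩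
  exact this.2 c h1 h2

lemma bs_le_of (p : Fin n) (a : ℕ) (h1 : a ≤ p.1) (h2 : ∀ c : ℕ, a ≤ c → c < p.1 → gapMem n J c) :
    blockStart n J p ≤ a := Nat.sInf_le ⟨h1, h2⟩

lemma be_gap (p : Fin n) (c : ℕ) (h1 : p.1 ≤ c) (h2 : c < blockEnd n J p) : gapMem n J c :=
  (blockEnd_mem n J p).2.2 c h1 h2

lemma le_be_of (p : Fin n) (b : ℕ) (h0 : b < n) (h1 : p.1 ≤ b)
    (h2 : ∀ c : ℕ, p.1 ≤ c → c < b → gapMem n J c) : b ≤ blockEnd n J p :=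
  le_csSup ⟨n, fun _ hb => le_of_lt hb.1⟩ ⟨h0, h1, h2⟩

/-- all gaps inside the block of `p` are in `J` -/
lemma blk_gap (p : Fin n) (c : ℕ) (h1 : blockStart n J p ≤ c) (h2 : c < blockEnd n J p) :
    gapMem n J c := by
  rcases lt_or_ge c p.1 with h | h
  · exact bs_gap p c h1 h
  · exact be_gap p c h h2

lemma bs_pred_not (p : Fin n) (c : ℕ) (h : c + 1 = blockStart n J p) : ¬ gapMem n J c := by
  intro hc
  have h3 := blockStart_le n J p
  have := bs_le_of (J := J) p c (by omega) (by
    intro d hd1 hd2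
    rcases Nat.eq_or_lt_of_le hd1 with h' | h'
    · rw [← h']; exact hc
    · exact bs_gap p d (by omega) hd2)
  omega

lemma be_not (p : Fin n) : ¬ gapMem n J (blockEnd n J p) := by
  intro hc
  have h3 := le_blockEnd n J p
  obtain ⟨h, _⟩ := id hc
  have := le_be_of (J := J) p (blockEnd n J p + 1) (by omega) (by omega) (by
    intro d hd1 hd2
    rcases Nat.lt_or_ge d (blockEnd n J p) with h' | h'
    · exact be_gap p d hd1 h'
    · have : d = blockEnd n J p := by omega
      rw [this]; exact hc)
  omega

lemma bs_eq_of_mem (p q : Fin n) (h1 : blockStart n J p ≤ q.1) (h2 : q.1 ≤ blockEnd n J p) :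
    blockStart n J q = blockStart n J p := by
  apply le_antisymm
  · exact bs_le_of q _ h1 (fun c hc1 hc2 => blk_gap p c hc1 (by omega))
  · by_contra hlt
    push Not at hlt
    exact bs_pred_not (J := J) p (blockStart n J p - 1) (by omega)
      (bs_gap q _ (by omega) (by omega))

lemma be_eq_of_mem (p q : Fin n) (h1 : blockStart n J p ≤ q.1) (h2 : q.1 ≤ blockEnd n J p) :
    blockEnd n J q = blockEnd n J p := by
  apply le_antisymm
  · by_contra hlt
    push Not at hlt
    exact be_not p (be_gap q _ h2 hlt)
  · exact le_be_of q _ (blockEnd_lt n J p) h2 (fun c hc1 hc2 => blk_gap p c (by omega) hc2)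

lemma mem_of_bs_eq (p q : Fin n) (h : blockStart n J q = blockStart n J p) :
    q.1 ≤ blockEnd n J p := by
  rcases le_total q.1 p.1 with h' | h'
  · exact h'.trans (le_blockEnd n J p)
  · refine le_be_of p _ q.2 h' (fun c hc1 hc2 => bs_gap q c ?_ hc2)
    have := blockStart_le n J p
    omega

lemma be_eq_of_bs_eq (p q : Fin n) (h : blockStart n J q = blockStart n J p) :
    blockEnd n J q = blockEnd n J p :=
  be_eq_of_mem p q (h ▸ blockStart_le n J q) (mem_of_bs_eq p q h)

lemma bs_lt_iff (p q : Fin n) : blockStart n J p < blockStart n J q ↔ blockEnd n J p < q.1 := by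
  constructor
  · intro h
    by_contra h2
    push Not at h2
    have := bs_eq_of_mem p q (by have := blockStart_le n J q; omega) h2
    omega
  · intro h
    by_contra h2
    push Not at h2
    have h3 := le_blockEnd n J p
    have := bs_eq_of_mem (J := J) q p (by have := blockStart_le n J p; omega) (by have := le_blockEnd n J q; omega)
    have := mem_of_bs_eq p q this.symm
    omega

lemma bs_mono (p q : Fin n) (h : p.1 ≤ q.1) : blockStart n J p ≤ blockStart n J q := by
  by_contra h2
  push Not at h2
  have := (bs_lt_iff q p).1 h2
  have := le_blockEnd n J q
  omega

/-- the longest element of the Young subgroup -/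
def tau (n : ℕ) (J : Set (Fin (n-1))) (p : Fin n) : Fin n :=
  ⟨blockStart n J p + blockEnd n J p - p.1, by
    have := blockStart_le n J p
    have := blockEnd_lt n J p
    have := le_blockEnd n J p
    omega⟩

lemma tau_val (p : Fin n) : (tau n J p).1 + p.1 = blockStart n J p + blockEnd n J p := by
  have := blockStart_le n J p
  have := le_blockEnd n J p
  simp only [tau]; omega

lemma bs_tau (p : Fin n) : blockStart n J (tau n J p) = blockStart n J p := by
  have := blockStart_le n J p
  have := le_blockEnd n J p
  have := tau_val (J := J) p
  apply bs_eq_of_mem <;> omega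

lemma be_tau (p : Fin n) : blockEnd n J (tau n J p) = blockEnd n J p :=
  be_eq_of_bs_eq _ _ (bs_tau p)

lemma tau_tau (p : Fin n) : tau n J (tau n J p) = p := by
  have h1 := tau_val (J := J) p
  have h2 := tau_val (J := J) (tau n J p)
  rw [bs_tau, be_tau] at h2
  apply Fin.ext; omega

lemma tau_lt_of_bs_lt (p q : Fin n) (h : blockStart n J p < blockStart n J q) :
    tau n J p < tau n J q := by
  have h3 : blockStart n J (tau n J p) < blockStart n J (tau n J q) := by simpa [bs_tau] using h
  have h4 := (bs_lt_iff _ _).1 h3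
  have := le_blockEnd n J (tau n J p)
  exact Fin.lt_def.2 (by omega)

/-- the longest element, as a permutation -/
def tauP (n : ℕ) (J : Set (Fin (n-1))) : Equiv.Perm (Fin n) :=
  ⟨tau n J, tau n J, tau_tau, tau_tau⟩

end blocks

/-- the sign appearing in `wJ` -/
def sgn (n : ℕ) (J : Set (Fin (n-1))) (p : Fin n) : ℂ := (-1 : ℂ) ^ ((p : ℕ) - blockStart n J p)

lemma sgn_mul_self (n : ℕ) (J : Set (Fin (n-1))) (p : Fin n) : sgn n J p * sgn n J p = 1 := by
  unfold sgn; rw [← mul_pow]; simp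

lemma sgn_ne (n : ℕ) (J : Set (Fin (n-1))) (p : Fin n) : sgn n J p ≠ 0 := by
  unfold sgn; simp

/-- monomial matrices -/
def mono {n : ℕ} (σ : Equiv.Perm (Fin n)) (s : Fin n → ℂ) : Matrix (Fin n) (Fin n) ℂ :=
  fun p q => if q = σ p then s p else 0

lemma mono_mul {n : ℕ} (σ : Equiv.Perm (Fin n)) (s : Fin n → ℂ) (M : Matrix (Fin n) (Fin n) ℂ)
    (p q : Fin n) : (mono σ s * M) p q = s p * M (σ p) q := by
  simp [mono, Matrix.mul_apply]

lemma mul_mono {n : ℕ} (σ : Equiv.Perm (Fin n)) (s : Fin n → ℂ) (M : Matrix (Fin n) (Fin n) ℂ)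
    (p q : Fin n) : (M * mono σ s) p q = M p (σ.symm q) * s (σ.symm q) := by
  have : ∀ x, (q = σ x) ↔ x = σ.symm q := fun x => by
    constructor
    · rintro rfl; simp
    · rintro rfl; simp
  simp [mono, Matrix.mul_apply, this]

lemma wJ_eq (n : ℕ) (J : Set (Fin (n-1))) : wJ n J = mono (tauP n J) (sgn n J) := by
  ext p q
  have h1 := tau_val (J := J) p
  have : ((p : ℕ) + (q : ℕ) = blockStart n J p + blockEnd n J p) ↔ q = tau n J p := by
    rw [Fin.ext_iff]; omega
  simp only [wJ, mono, sgn, this]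
  rfl

lemma det_mono {n : ℕ} (σ : Equiv.Perm (Fin n)) (s : Fin n → ℂ) :
    (mono σ s).det = (∏ p, s p) * ((Equiv.Perm.sign σ : ℤ) : ℂ) := by
  have : mono σ s = Matrix.diagonal s * (1 : Matrix (Fin n) (Fin n) ℂ).submatrix σ id := by
    ext p q
    simp [mono, Matrix.diagonal_mul, Matrix.one_apply, eq_comm]
  rw [this, Matrix.det_mul, Matrix.det_diagonal, Matrix.det_permute]
  simp

lemma det_wJ (n : ℕ) (J : Set (Fin (n-1))) : (wJ n J).det = 1 := by
  rw [wJ_eq, det_mono]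
  have h : ((Equiv.Perm.sign (tauP n J) : ℤ) : ℂ) = ∏ p, sgn n J p := by
    rw [Equiv.Perm.sign_eq_prod_prod_Iio]
    push_cast
    refine Finset.prod_congr rfl (fun p _ => ?_)
    have : ∀ q ∈ Finset.Iio p, (((if tauP n J q < tauP n J p then (1 : ℤˣ) else -1 : ℤˣ) : ℤ) : ℂ)
        = if blockStart n J p ≤ q.1 then -1 else 1 := by
      intro q hq
      have hq' : q < p := Finset.mem_Iio.1 hq
      change (((if tau n J q < tau n J p then (1 : ℤˣ) else -1 : ℤˣ) : ℤ) : ℂ) = _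
      rcases (bs_mono (J := J) q p hq'.le).lt_or_eq with h1 | h1
      · rw [if_pos (tau_lt_of_bs_lt _ _ h1), if_neg]
        · simp
        · have := (bs_lt_iff q p).1 h1
          intro h2
          have := bs_eq_of_mem (J := J) p q h2 (by have := le_blockEnd n J p; have : q.1 < p.1 := hq'; omega)
          omega
      · rw [if_neg, if_pos]
        · simp
        · rw [← h1]; exact blockStart_le n J q
        · have := be_eq_of_bs_eq _ _ h1
          have a1 := tau_val (J := J) p
          have a2 := tau_val (J := J) q
          have : q.1 < p.1 := hq'
          rw [Fin.lt_def]; omega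
    rw [Finset.prod_congr rfl this, Finset.prod_ite]
    simp only [Finset.prod_const, one_pow, mul_one, sgn]
    congr 1
    have hb : blockStart n J p < n := lt_of_le_of_lt (blockStart_le n J p) p.2
    have : (Finset.Iio p).filter (fun q => blockStart n J p ≤ q.1)
        = Finset.Ico (⟨blockStart n J p, hb⟩ : Fin n) p := by
      ext q
      rw [Finset.mem_filter, Finset.mem_Iio, Finset.mem_Ico, and_comm, Fin.le_def]
    rw [this, Fin.card_Ico]
  rw [h, ← Finset.prod_mul_distrib]
  exact Finset.prod_eq_one (fun p _ => sgn_mul_self n J p)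

section tri
variable {n : ℕ}

lemma lowerTri_iff (M : Matrix (Fin n) (Fin n) ℂ) :
    lowerTri n M ↔ M.BlockTriangular OrderDual.toDual := by
  constructor
  · intro h i j hij; exact h i j hij
  · intro h i j hij; exact h (show OrderDual.toDual j < OrderDual.toDual i from hij)

lemma upperTri_iff (M : Matrix (Fin n) (Fin n) ℂ) :
    upperTri n M ↔ M.BlockTriangular id := by
  constructor
  · intro h i j hij; exact h i j hij
  · intro h i j hij; exact h hij

lemma lowerTri_mul {A B : Matrix (Fin n) (Fin n) ℂ} (hA : lowerTri n A) (hB : lowerTri n B) :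
    lowerTri n (A * B) := by
  rw [lowerTri_iff] at *; exact hA.mul hB

lemma lowerTri_inv {A : Matrix (Fin n) (Fin n) ℂ} (hA : lowerTri n A) (hd : A.det ≠ 0) :
    lowerTri n A⁻¹ := by
  rw [lowerTri_iff] at *
  have := Matrix.invertibleOfIsUnitDet A (isUnit_iff_ne_zero.2 hd)
  exact Matrix.blockTriangular_inv_of_blockTriangular hA

lemma upperTri_inv {A : Matrix (Fin n) (Fin n) ℂ} (hA : upperTri n A) (hd : A.det ≠ 0) :
    upperTri n A⁻¹ := by
  rw [upperTri_iff] at *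
  have := Matrix.invertibleOfIsUnitDet A (isUnit_iff_ne_zero.2 hd)
  exact Matrix.blockTriangular_inv_of_blockTriangular hA

lemma lowerTri_det {A : Matrix (Fin n) (Fin n) ℂ} (hA : lowerTri n A) :
    A.det = ∏ i, A i i := Matrix.det_of_isLowerTriangular A ((lowerTri_iff A).1 hA)

lemma upperTri_det {A : Matrix (Fin n) (Fin n) ℂ} (hA : upperTri n A) :
    A.det = ∏ i, A i i := Matrix.det_of_isUpperTriangular ((upperTri_iff A).1 hA)

/-- zero above the superdiagonal -/
def Hess (M : Matrix (Fin n) (Fin n) ℂ) : Prop := ∀ i j : Fin n, (i : ℕ) + 1 < (j : ℕ) → M i j = 0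

lemma Hess.lower_mul {A H : Matrix (Fin n) (Fin n) ℂ} (hH : Hess H) (hA : lowerTri n A) :
    Hess (A * H) := by
  intro i j hij
  rw [Matrix.mul_apply]
  refine Finset.sum_eq_zero (fun k _ => ?_)
  rcases lt_or_ge i k with h | h
  · rw [hA i k h, zero_mul]
  · rw [hH k j (by rw [Fin.le_def] at h; omega), mul_zero]

lemma Hess.mul_lower {A H : Matrix (Fin n) (Fin n) ℂ} (hH : Hess H) (hA : lowerTri n A) :
    Hess (H * A) := by
  intro i j hij
  rw [Matrix.mul_apply]
  refine Finset.sum_eq_zero (fun k _ => ?_)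
  rcases lt_or_ge k j with h | h
  · rw [hA k j h, mul_zero]
  · rw [hH i k (by rw [Fin.le_def] at h; omega), zero_mul]

lemma Delta_mul_left (A B : Matrix (Fin n) (Fin n) ℂ) (i : Fin (n-1))
    (h : ∀ p r : Fin n, i.1 < p.1 → r.1 ≤ i.1 → A p r * B r p = 0 ∧ ∀ q : Fin n, i.1 < q.1 → A p r * B r q = 0) :
    Delta n (A * B) i = Delta n A i * Delta n B i := by
  unfold Delta
  rw [← Matrix.det_mul]
  congr 1
  ext p q
  simp only [Matrix.mul_apply, Matrix.submatrix_apply]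
  symm
  refine Fintype.sum_of_injective
    (fun k : Fin (n - (i.1 + 1)) => (⟨k.1 + (i.1 + 1), by have := k.isLt; omega⟩ : Fin n))
    ?_ _ _ ?_ ?_
  · intro a b hab
    simp only [Fin.mk.injEq] at hab
    apply Fin.ext; omega
  · intro r hr
    have : r.1 ≤ i.1 := by
      by_contra hc
      apply hr
      exact ⟨⟨r.1 - (i.1+1), by omega⟩, by apply Fin.ext; simp; omega⟩
    exact (h _ r (by simp; omega) this).2 _ (by simp; omega)
  · intro k; rfl

lemma Delta_mul_A (A B : Matrix (Fin n) (Fin n) ℂ) (i : Fin (n-1))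
    (h : ∀ p r : Fin n, i.1 < p.1 → r.1 ≤ i.1 → A p r = 0) :
    Delta n (A * B) i = Delta n A i * Delta n B i :=
  Delta_mul_left A B i (fun p r h1 h2 => by simp [h p r h1 h2])

lemma Delta_mul_B (A B : Matrix (Fin n) (Fin n) ℂ) (i : Fin (n-1))
    (h : ∀ r q : Fin n, i.1 < q.1 → r.1 ≤ i.1 → B r q = 0) :
    Delta n (A * B) i = Delta n A i * Delta n B i :=
  Delta_mul_left A B i (fun p r h1 h2 =>
    ⟨by simp [h r p h1 h2], fun q h3 => by simp [h r q h3 h2]⟩)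

lemma Delta_one (i : Fin (n-1)) : Delta n (1 : Matrix (Fin n) (Fin n) ℂ) i = 1 := by
  unfold Delta
  rw [Matrix.submatrix_one]
  · simp
  · intro a b hab
    simp only [Fin.mk.injEq] at hab
    apply Fin.ext; omega

lemma Delta_A_ne (A : Matrix (Fin n) (Fin n) ℂ) (i : Fin (n-1)) (hd : A.det ≠ 0)
    (h : ∀ p r : Fin n, i.1 < p.1 → r.1 ≤ i.1 → A p r = 0) : Delta n A i ≠ 0 := by
  have := Delta_mul_A A A⁻¹ i h
  rw [Matrix.mul_nonsing_inv _ (isUnit_iff_ne_zero.2 hd), Delta_one] at this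
  intro h0; rw [h0] at this; simp at this

lemma Delta_B_ne (A : Matrix (Fin n) (Fin n) ℂ) (i : Fin (n-1)) (hd : A.det ≠ 0)
    (h : ∀ r q : Fin n, i.1 < q.1 → r.1 ≤ i.1 → A r q = 0) : Delta n A i ≠ 0 := by
  have := Delta_mul_B A⁻¹ A i h
  rw [Matrix.nonsing_inv_mul _ (isUnit_iff_ne_zero.2 hd), Delta_one] at this
  intro h0; rw [h0] at this; simp at this

lemma Delta_upper_mul (A B : Matrix (Fin n) (Fin n) ℂ) (i : Fin (n-1)) (hd : A.det ≠ 0)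
    (hA : upperTri n A) : Delta n (A * B) i = 0 ↔ Delta n B i = 0 := by
  have h : ∀ p r : Fin n, i.1 < p.1 → r.1 ≤ i.1 → A p r = 0 :=
    fun p r h1 h2 => hA p r (Fin.lt_def.2 (by omega))
  rw [Delta_mul_A A B i h]
  simp [Delta_A_ne A i hd h]

lemma Delta_mul_lower (A B : Matrix (Fin n) (Fin n) ℂ) (i : Fin (n-1)) (hd : B.det ≠ 0)
    (hB : lowerTri n B) : Delta n (A * B) i = 0 ↔ Delta n A i = 0 := by
  have h : ∀ r q : Fin n, i.1 < q.1 → r.1 ≤ i.1 → B r q = 0 :=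
    fun p r h1 h2 => hB p r (Fin.lt_def.2 (by omega))
  rw [Delta_mul_B A B i h]
  simp [Delta_B_ne B i hd h]

lemma det_mono_ne (σ : Equiv.Perm (Fin n)) (s : Fin n → ℂ) (hs : ∀ p, s p ≠ 0) :
    (mono σ s).det ≠ 0 := by
  rw [det_mono]
  refine mul_ne_zero (Finset.prod_ne_zero_iff.2 (fun p _ => hs p)) ?_
  rcases Int.units_eq_one_or (Equiv.Perm.sign σ) with h | h <;> simp [h]

lemma Delta_mono (σ : Equiv.Perm (Fin n)) (s : Fin n → ℂ) (hs : ∀ p, s p ≠ 0) (i : Fin (n-1)) :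
    Delta n (mono σ s) i ≠ 0 ↔ ∀ k : Fin n, i.1 < k.1 → i.1 < (σ k).1 := by
  constructor
  · intro h k hk
    by_contra hc
    apply h
    unfold Delta
    refine Matrix.det_eq_zero_of_row_eq_zero ⟨k.1 - (i.1+1), by omega⟩ (fun j => ?_)
    simp only [Matrix.submatrix_apply, mono]
    rw [if_neg]
    intro h2
    have h3 : (⟨k.1 - (i.1 + 1) + (i.1 + 1), by omega⟩ : Fin n) = k := by
      apply Fin.ext; simp; omega
    rw [h3] at h2
    have := congrArg Fin.val h2
    simp at this
    omega
  · intro h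
    refine Delta_A_ne _ i (det_mono_ne σ s hs) (fun p r h1 h2 => ?_)
    unfold mono
    rw [if_neg]
    rintro rfl
    have := h p h1
    omega

lemma Delta_wJ (K : Set (Fin (n-1))) (i : Fin (n-1)) : Delta n (wJ n K) i = 0 ↔ i ∈ K := by
  rw [wJ_eq]
  have := Delta_mono (tauP n K) (sgn n K) (sgn_ne n K) i
  have hi := i.2
  rw [← not_iff_not, ← ne_eq, this]
  constructor
  · intro h hK
    let k : Fin n := ⟨i.1 + 1, by omega⟩
    let k' : Fin n := ⟨i.1, by omega⟩
    have h1 := h k (by simp [k])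
    change i.1 < (tau n K k).1 at h1
    have e : blockStart n K k ≤ i.1 := by
      refine bs_le_of k _ (by simp [k]) (fun c hc1 hc2 => ?_)
      have : c = i.1 := by simp [k] at hc2; omega
      subst this; exact ⟨hi, hK⟩
    have h2 := h (tau n K ⟨blockStart n K k, by omega⟩) (by
      have a := tau_val (J := K) ⟨blockStart n K k, by omega⟩
      have b := bs_eq_of_mem (J := K) k ⟨blockStart n K k, by omega⟩ (le_refl _)
        (by have := le_blockEnd n K k; have := blockStart_le n K k; simp; omega)
      have c := be_eq_of_bs_eq _ _ b
      rw [b, c] at a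
      have := le_blockEnd n K k
      simp [k] at *
      omega)
    change i.1 < (tau n K (tau n K _)).1 at h2
    rw [tau_tau] at h2
    simp at h2
    omega
  · intro hK k hk
    change i.1 < (tau n K k).1
    have a := tau_val (J := K) k
    have b := le_blockEnd n K k
    have : i.1 < blockStart n K k := by
      by_contra hc
      exact hK (bs_gap k i.1 (by omega) hk).2
    omega

end tri

section main
variable {n : ℕ} {J : Set (Fin (n-1))}

lemma wJ_inv : (wJ n J)⁻¹ = mono (tauP n J) (fun p => sgn n J (tau n J p)) := by
  apply Matrix.inv_eq_left_inv
  ext p q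
  rw [mono_mul, wJ_eq]
  have : tauP n J (tauP n J p) = p := tau_tau p
  simp only [mono, this, Matrix.one_apply]
  change _ * (if q = p then sgn n J (tau n J p) else 0) = _
  by_cases h : p = q
  · subst h; simp [sgn_mul_self]
  · simp [h, Ne.symm h]

lemma wJ_conj (M : Matrix (Fin n) (Fin n) ℂ) (p q : Fin n) :
    ((wJ n J)⁻¹ * M * wJ n J) p q =
      sgn n J (tau n J p) * M (tau n J p) (tau n J q) * sgn n J (tau n J q) := by
  rw [Matrix.mul_assoc, wJ_inv, mono_mul, wJ_eq, mul_mono]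
  change _ * (M (tau n J p) (tau n J q) * sgn n J (tau n J q)) = _
  ring

lemma lower_mul_R {L R : Matrix (Fin n) (Fin n) ℂ} (hL : lowerTri n L)
    (hR : ∀ p q, blockStart n J p ≤ blockStart n J q → R p q = 0) (p q : Fin n)
    (h : blockStart n J p ≤ blockStart n J q) : (L * R) p q = 0 := by
  rw [Matrix.mul_apply]
  refine Finset.sum_eq_zero (fun k _ => ?_)
  rcases lt_or_ge p k with h' | h'
  · rw [hL p k h', zero_mul]
  · rw [hR k q ((bs_mono k p h').trans h), mul_zero]

lemma f_mul (M : Matrix (Fin n) (Fin n) ℂ) (p q : Fin n) :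
    (fMat n * M) p q = if h : 0 < p.1 then M ⟨p.1 - 1, by omega⟩ q else 0 := by
  rw [Matrix.mul_apply]
  split_ifs with h
  · rw [Finset.sum_eq_single (⟨p.1 - 1, by omega⟩ : Fin n)]
    · simp only [fMat]; rw [if_pos (by omega), one_mul]
    · intro b _ hb
      simp only [fMat]; rw [if_neg, zero_mul]
      intro hc; apply hb; apply Fin.ext; simp; omega
    · simp
  · refine Finset.sum_eq_zero (fun k _ => ?_)
    simp only [fMat]; rw [if_neg (by omega), zero_mul]

lemma mul_f (M : Matrix (Fin n) (Fin n) ℂ) (p q : Fin n) :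
    (M * fMat n) p q = if h : q.1 + 1 < n then M p ⟨q.1 + 1, h⟩ else 0 := by
  rw [Matrix.mul_apply]
  split_ifs with h
  · rw [Finset.sum_eq_single (⟨q.1 + 1, h⟩ : Fin n)]
    · simp [fMat]
    · intro b _ hb
      simp only [fMat]; rw [if_neg, mul_zero]
      intro hc; apply hb; apply Fin.ext; simp; omega
    · simp
  · refine Finset.sum_eq_zero (fun k _ => ?_)
    simp only [fMat]; rw [if_neg (by omega), mul_zero]

lemma toeplitz_lower {x : Matrix (Fin n) (Fin n) ℂ} (hx : IsJToeplitz n J x) : lowerTri n x := by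
  obtain ⟨c, _, h⟩ := hx
  intro i j hij
  rw [h, if_neg]
  rintro ⟨_, h2⟩
  rw [Fin.lt_def] at hij; omega

lemma f_lower : lowerTri n (fMat n) := by
  intro i j hij
  rw [Fin.lt_def] at hij
  simp only [fMat]; rw [if_neg (by omega)]

lemma toeplitz_comm {x : Matrix (Fin n) (Fin n) ℂ} (hx : IsJToeplitz n J x) (p q : Fin n)
    (hpq : blockStart n J p ≤ blockStart n J q) : (fMat n * x - x * fMat n) p q = 0 := by
  have hl := toeplitz_lower hx
  obtain ⟨c, _, h⟩ := hx
  rw [Matrix.sub_apply, f_mul, mul_f]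
  rcases le_or_gt p.1 q.1 with h1 | h1
  · have e1 : (if h : 0 < p.1 then x ⟨p.1 - 1, by omega⟩ q else 0) = 0 := by
      split_ifs with h0
      · exact hl _ _ (by rw [Fin.lt_def]; simp; omega)
      · rfl
    have e2 : (if h : q.1 + 1 < n then x p ⟨q.1 + 1, h⟩ else 0) = 0 := by
      split_ifs with h0
      · exact hl _ _ (by rw [Fin.lt_def]; simp; omega)
      · rfl
    rw [e1, e2, sub_zero]
  · have e : blockStart n J p = blockStart n J q := le_antisymm hpq (bs_mono q p h1.le)
    have b1 := bs_mono (J := J) q ⟨p.1 - 1, by omega⟩ (by simp; omega)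
    have b2 := bs_mono (J := J) ⟨p.1 - 1, by omega⟩ p (by simp)
    have b3 := bs_mono (J := J) q ⟨q.1 + 1, by omega⟩ (by simp)
    have b4 := bs_mono (J := J) ⟨q.1 + 1, by omega⟩ p (by simp; omega)
    rw [dif_pos (by omega), dif_pos (by omega), h, h, if_pos ⟨by omega, by simp; omega⟩,
      if_pos ⟨by omega, by simp; omega⟩]
    have : blockStart n J ⟨p.1 - 1, by omega⟩ = blockStart n J p := by omega
    rw [this]
    have : p.1 - 1 - q.1 = p.1 - (q.1 + 1) := by omega
    simp [this]

/-- the Peterson condition for `x * wJ` -/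
lemma toeplitz_hess {x : Matrix (Fin n) (Fin n) ℂ} (hx : IsJToeplitz n J x) (hd : x.det = 1) :
    Hess ((wJ n J)⁻¹ * (x⁻¹ * fMat n * x) * wJ n J) := by
  intro p q hpq
  rw [wJ_conj]
  have hu : IsUnit x.det := by rw [hd]; exact isUnit_one
  have hl := toeplitz_lower hx
  have hli := lowerTri_inv hl (by rw [hd]; exact one_ne_zero)
  suffices h : (x⁻¹ * fMat n * x) (tau n J p) (tau n J q) = 0 by rw [h]; simp
  have t1 := tau_tau (J := J) p
  have t2 := tau_tau (J := J) q
  rcases lt_or_ge (tau n J p) (tau n J q) with h1 | h1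
  · exact lowerTri_mul (lowerTri_mul hli f_lower) hl _ _ h1
  have h2 := bs_mono (J := J) (tau n J q) (tau n J p) h1
  rcases h2.lt_or_eq with h3 | h3
  · have := tau_lt_of_bs_lt _ _ h3
    rw [t1, t2, Fin.lt_def] at this
    omega
  · have e : x⁻¹ * fMat n * x = fMat n + x⁻¹ * (fMat n * x - x * fMat n) := by
      rw [Matrix.mul_sub, ← Matrix.mul_assoc, ← Matrix.mul_assoc, Matrix.nonsing_inv_mul _ hu,
        Matrix.one_mul]
      abel
    rw [e, Matrix.add_apply, lower_mul_R hli (toeplitz_comm hx) _ _ h3.ge, add_zero]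
    have a1 := tau_val (J := J) p
    have a2 := tau_val (J := J) q
    rw [bs_tau, bs_tau] at h3
    have h4 := be_eq_of_bs_eq _ _ h3
    simp only [fMat]
    rw [if_neg]
    omega

lemma hess_conj {g l A : Matrix (Fin n) (Fin n) ℂ} (hl : lowerTri n l) (hd : l.det ≠ 0)
    (h : Hess (g⁻¹ * A * g)) : Hess ((g * l)⁻¹ * A * (g * l)) := by
  have : (g * l)⁻¹ * A * (g * l) = l⁻¹ * (g⁻¹ * A * g) * l := by
    rw [Matrix.mul_inv_rev]; simp only [Matrix.mul_assoc]
  rw [this]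
  exact (h.lower_mul (lowerTri_inv hl hd)).mul_lower hl

/-- existence of the Bruhat decomposition, in row-reduced form -/
lemma bruhat (g : Matrix (Fin n) (Fin n) ℂ) (hd : g.det ≠ 0) :
    ∃ u : Matrix (Fin n) (Fin n) ℂ, upperTri n u ∧ (∀ i, u i i = 1) ∧
      ∃ σ : Equiv.Perm (Fin n), ∀ p q, σ p < q → (u * g) p q = 0 := by
  let Good : Fin n → ℕ → Prop := fun i m => ∃ c : Fin n → ℂ, c i = 1 ∧ (∀ j, j < i → c j = 0) ∧
    ∀ q : Fin n, m ≤ q.1 → (c ᵥ* g) q = 0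
  have hG : ∀ i, ∃ m, Good i m := fun i =>
    ⟨n, Pi.single i 1, by simp, fun j hj => by simp [hj.ne], fun q hq => by omega⟩
  let m : Fin n → ℕ := fun i => Nat.find (hG i)
  have hm : ∀ i, Good i (m i) := fun i => Nat.find_spec (hG i)
  have hmin : ∀ i k, Good i k → m i ≤ k := fun i k h => Nat.find_min' (hG i) h
  have hmn : ∀ i, m i ≤ n := fun i => hmin i n
    ⟨Pi.single i 1, by simp, fun j hj => by simp [hj.ne], fun q hq => by omega⟩
  have hm0 : ∀ i, m i ≠ 0 := by
    intro i h0
    obtain ⟨c, h1, _, h3⟩ := hm i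
    have : c ᵥ* g = 0 := by
      ext q; exact h3 q (by omega)
    have := Matrix.eq_zero_of_vecMul_eq_zero hd this
    rw [this] at h1; simp at h1
  choose c hc1 hc2 hc3 using hm
  have hne : ∀ i, ∀ q : Fin n, q.1 + 1 = m i → (c i ᵥ* g) q ≠ 0 := by
    intro i q hq h0
    have := hmin i (m i - 1) ⟨c i, hc1 i, hc2 i, fun r hr => by
      rcases Nat.lt_or_ge r.1 (m i) with h | h
      · have : r = q := by apply Fin.ext; omega
        rw [this]; exact h0
      · exact hc3 i r h⟩
    have := hm0 i
    omega
  have hinj' : ∀ i k, i < k → m i ≠ m k := by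
    intro i k hik he
    have a := hm0 i
    have b := hmn i
    let q : Fin n := ⟨m i - 1, by omega⟩
    have n1 := hne k q (by simp [q]; omega)
    have := hmin i (m i - 1) ⟨c i - ((c i ᵥ* g) q / (c k ᵥ* g) q) • c k, ?_, ?_, ?_⟩
    · omega
    · simp [hc1, hc2 k i hik]
    · intro j hj
      simp [hc2 i j hj, hc2 k j (hj.trans hik)]
    · intro r hr
      rw [Matrix.sub_vecMul, Matrix.smul_vecMul, Pi.sub_apply, Pi.smul_apply, smul_eq_mul]
      rcases Nat.lt_or_ge r.1 (m i) with h | h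
      · have : r = q := by apply Fin.ext; simp [q]; omega
        rw [this]; field_simp; ring
      · rw [hc3 i r h, hc3 k r (by omega)]; simp
  let σ : Fin n → Fin n := fun i => ⟨m i - 1, by have := hm0 i; have := hmn i; omega⟩
  have hσ : Function.Injective σ := by
    intro i k h
    have h1 : m i - 1 = m k - 1 := congrArg Fin.val h
    have := hm0 i
    have := hm0 k
    rcases lt_trichotomy i k with h2 | h2 | h2
    · exact absurd (by omega) (hinj' i k h2)
    · exact h2
    · exact absurd (by omega) (hinj' k i h2)
  refine ⟨fun i => c i, fun i j hij => hc2 i j hij, hc1,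
    Equiv.ofBijective σ (Finite.injective_iff_bijective.1 hσ), fun p q hpq => ?_⟩
  have : m p - 1 < q.1 := hpq
  exact hc3 p q (by omega)

/-- the combinatorial heart -/
lemma perm_eq_tau (σ : Equiv.Perm (Fin n)) (K : Set (Fin (n-1)))
    (h1 : ∀ p q : Fin n, q.1 = p.1 + 1 → (σ p).1 ≤ (σ q).1 + 1)
    (h2 : ∀ i : Fin (n-1), i ∉ K ↔ ∀ k : Fin n, i.1 < k.1 → i.1 < (σ k).1) (p : Fin n) :
    σ p = tau n K p := by
  set a := blockStart n K p with ha
  set b := blockEnd n K p with hb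
  have hbn : b < n := blockEnd_lt n K p
  have hap : a ≤ p.1 := blockStart_le n K p
  have hpb : p.1 ≤ b := le_blockEnd n K p
  have up : ∀ k : Fin n, b < k.1 → b < (σ k).1 := by
    intro k hk
    have := k.2
    have hh : (⟨b, by omega⟩ : Fin (n-1)) ∉ K := fun hK => be_not p ⟨_, hK⟩
    exact (h2 _).1 hh k hk
  have upb : ∀ k : Fin n, b < (σ k).1 → b < k.1 := by
    have hs : (Finset.univ.filter (fun k : Fin n => b < k.1)).map σ.toEmbedding
        = Finset.univ.filter (fun k : Fin n => b < k.1) := by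
      apply Finset.eq_of_subset_of_card_le
      · intro y hy
        simp only [Finset.mem_map, Finset.mem_filter, Finset.mem_univ, true_and] at hy ⊢
        obtain ⟨k, hk, rfl⟩ := hy
        exact up k hk
      · rw [Finset.card_map]
    intro k hk
    have : σ k ∈ Finset.univ.filter (fun k : Fin n => b < k.1) := by simp [hk]
    rw [← hs] at this
    simpa using this
  have lo : ∀ k : Fin n, a ≤ k.1 → a ≤ (σ k).1 := by
    intro k hk
    rcases Nat.eq_zero_or_pos a with h0 | h0
    · omega
    have hh : (⟨a - 1, by omega⟩ : Fin (n-1)) ∉ K := fun hK =>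
      bs_pred_not p (a - 1) (by omega) ⟨_, hK⟩
    have := (h2 _).1 hh k (by simp; omega)
    simp at this
    omega
  have lob : ∀ k : Fin n, a ≤ (σ k).1 → a ≤ k.1 := by
    have hs : (Finset.univ.filter (fun k : Fin n => a ≤ k.1)).map σ.toEmbedding
        = Finset.univ.filter (fun k : Fin n => a ≤ k.1) := by
      apply Finset.eq_of_subset_of_card_le
      · intro y hy
        simp only [Finset.mem_map, Finset.mem_filter, Finset.mem_univ, true_and] at hy ⊢
        obtain ⟨k, hk, rfl⟩ := hy
        exact lo k hk
      · rw [Finset.card_map]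
    intro k hk
    have : σ k ∈ Finset.univ.filter (fun k : Fin n => a ≤ k.1) := by simp [hk]
    rw [← hs] at this
    simpa using this
  obtain ⟨r, hr⟩ := σ.surjective ⟨b, hbn⟩
  have hr' : (σ r).1 = b := by rw [hr]
  have hra : a ≤ r.1 := lob r (by omega)
  have hrb : r.1 ≤ b := by
    by_contra hc
    have := up r (by omega)
    omega
  have key : ∀ k : ℕ, ∀ q : Fin n, q.1 = r.1 + k → q.1 ≤ b → (σ q).1 = b - k := by
    intro k
    induction k using Nat.strong_induction_on with
    | _ k ih =>
      intro q hq hqb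
      rcases Nat.eq_zero_or_pos k with h0 | h0
      · have : q = r := by apply Fin.ext; omega
        rw [this]; omega
      · have e1 := ih (k-1) (by omega) ⟨q.1 - 1, by omega⟩ (by simp; omega) (by simp; omega)
        have e2 := h1 ⟨q.1 - 1, by omega⟩ q (by simp; omega)
        have e3 : (σ q).1 ≤ b := by
          by_contra hc
          have := upb q (by omega)
          omega
        by_contra hne
        have e4 := ih (b - (σ q).1) (by omega) ⟨r.1 + (b - (σ q).1), by omega⟩ (by simp)
          (by simp; omega)
        have e5 : σ ⟨r.1 + (b - (σ q).1), by omega⟩ = σ q := by apply Fin.ext; omega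
        have := congrArg Fin.val (σ.injective e5)
        simp at this
        omega
  have hreq : r.1 = a := by
    by_contra hne
    have hg : gapMem n K (r.1 - 1) := blk_gap p _ (by omega) (by omega)
    obtain ⟨hlt, hK⟩ := hg
    have := (not_congr (h2 ⟨r.1 - 1, hlt⟩)).1 (by simpa using hK)
    push Not at this
    obtain ⟨k, hk1, hk2⟩ := this
    simp at hk1 hk2
    have hkb : k.1 ≤ b := by
      by_contra hc
      have := up k (by omega)
      omega
    have := key (k.1 - r.1) k (by omega) hkb
    omega
  have e1 := key (p.1 - r.1) p (by omega) hpb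
  have e2 := tau_val (J := K) p
  apply Fin.ext
  omega

lemma bruhat_plus {K : Set (Fin (n-1))} {g : Matrix (Fin n) (Fin n) ℂ} (hd : g.det = 1)
    (hH : Hess (g⁻¹ * fMat n * g)) (hD : ∀ i, Delta n g i = 0 ↔ i ∈ K) : inBruhatPlus n K g := by
  have hgu : IsUnit g.det := by rw [hd]; exact isUnit_one
  obtain ⟨u, hu, hu1, σ, hσ⟩ := bruhat g (by rw [hd]; exact one_ne_zero)
  have hud : u.det = 1 := by rw [upperTri_det hu]; simp [hu1]
  have huu : IsUnit u.det := by rw [hud]; exact isUnit_one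
  have hui : upperTri n u⁻¹ := upperTri_inv hu (by rw [hud]; exact one_ne_zero)
  set L : Matrix (Fin n) (Fin n) ℂ := (u * g).submatrix σ.symm id with hL
  have hLl : lowerTri n L := by
    intro i j hij
    rw [hL, Matrix.submatrix_apply]
    exact hσ _ _ (by simpa using hij)
  have hPL : u * g = mono σ (fun _ => 1) * L := by
    ext p q
    rw [mono_mul]; simp [hL]
  have hLd : L.det ≠ 0 := by
    intro h0
    have := congrArg Matrix.det hPL
    rw [Matrix.det_mul, Matrix.det_mul, h0, hud, hd] at this
    simp at this
  have hLu : IsUnit L.det := isUnit_iff_ne_zero.2 hLd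
  set F := u * fMat n * u⁻¹ with hF
  have hFu : F * u = u * fMat n := by
    rw [hF, Matrix.mul_assoc, Matrix.nonsing_inv_mul _ huu, Matrix.mul_one]
  have huf : ∀ p q : Fin n, q.1 + 1 < p.1 → (u * fMat n) p q = 0 := by
    intro p q hpq
    rw [mul_f]
    split_ifs with h
    · exact hu _ _ (by rw [Fin.lt_def]; simpa using hpq)
    · rfl
  have hF0 : ∀ p q : Fin n, q.1 + 1 < p.1 → F p q = 0 := by
    intro p q hpq
    rw [hF, Matrix.mul_apply]
    refine Finset.sum_eq_zero (fun k _ => ?_)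
    rcases lt_or_ge q k with h | h
    · rw [hui k q h, mul_zero]
    · rw [huf p k (by rw [Fin.le_def] at h; omega), zero_mul]
  have hF1 : ∀ p q : Fin n, q.1 + 1 = p.1 → F p q ≠ 0 := by
    intro p q hpq h0
    have e1 : (F * u) p q = 1 := by
      rw [hFu, mul_f, dif_pos (by omega)]
      have : (⟨q.1 + 1, by omega⟩ : Fin n) = p := by apply Fin.ext; simpa using hpq
      rw [this, hu1]
    have e2 : (F * u) p q = 0 := by
      rw [Matrix.mul_apply]
      refine Finset.sum_eq_zero (fun k _ => ?_)
      rcases lt_trichotomy q k with h | h | h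
      · rw [hu k q h, mul_zero]
      · rw [← h, h0, zero_mul]
      · rw [hF0 p k (by rw [Fin.lt_def] at h; omega), zero_mul]
    rw [e1] at e2; exact one_ne_zero e2
  have hLA : L * (g⁻¹ * fMat n * g) * L⁻¹ = F.submatrix σ.symm σ.symm := by
    have e1 : u * g * (g⁻¹ * fMat n * g) = F * (u * g) := by
      rw [← Matrix.mul_assoc F, hFu]
      simp only [Matrix.mul_assoc]
      rw [← Matrix.mul_assoc g g⁻¹, Matrix.mul_nonsing_inv _ hgu, Matrix.one_mul]
    have e2 : L * (g⁻¹ * fMat n * g) = F.submatrix σ.symm σ.symm * L := by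
      have h3 : L * (g⁻¹ * fMat n * g) = (u * g * (g⁻¹ * fMat n * g)).submatrix σ.symm id := by
        ext p q; simp only [hL, Matrix.mul_apply, Matrix.submatrix_apply, id]
      rw [h3, e1, hL, Matrix.submatrix_mul_equiv]
    rw [e2, Matrix.mul_assoc, Matrix.mul_nonsing_inv _ hLu, Matrix.mul_one]
  have hHL : Hess (L * (g⁻¹ * fMat n * g) * L⁻¹) :=
    (hH.lower_mul hLl).mul_lower (lowerTri_inv hLl hLd)
  rw [hLA] at hHL
  have hστ : ∀ p, σ p = tau n K p := by
    apply perm_eq_tau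
    · intro p q hpq
      by_contra hc
      have := hHL (σ q) (σ p) (by omega)
      simp at this
      exact hF1 q p hpq.symm this
    · intro i
      rw [← Delta_mono σ (fun _ => 1) (fun _ => one_ne_zero) i, ← hD i,
        ← Delta_upper_mul u g i (by rw [hud]; exact one_ne_zero) hu, hPL,
        Delta_mul_lower _ L i hLd hLl]
  refine ⟨u⁻¹, (wJ n K)⁻¹ * (u * g), ?_, ?_, hui, ?_, ?_⟩
  · rw [Matrix.det_nonsing_inv, hud]; simp
  · rw [Matrix.det_mul, Matrix.det_nonsing_inv, det_wJ, Matrix.det_mul, hud, hd]; simp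
  · intro p q hpq
    rw [wJ_inv, mono_mul]
    have : (tauP n K) p = tau n K p := rfl
    rw [this, hσ _ _ (by rw [hστ, tau_tau]; exact hpq), mul_zero]
  · rw [Matrix.mul_assoc, ← Matrix.mul_assoc (wJ n K), Matrix.mul_nonsing_inv _ (by rw [det_wJ]; exact isUnit_one),
      Matrix.one_mul, ← Matrix.mul_assoc, Matrix.nonsing_inv_mul _ huu, Matrix.one_mul]

lemma toeplitz_of_bruhat {g : Matrix (Fin n) (Fin n) ℂ} (hd : g.det = 1)
    (hH : Hess (g⁻¹ * fMat n * g)) (hB : inBruhatMinus n J g) :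
    ∃ x b : Matrix (Fin n) (Fin n) ℂ,
        IsJToeplitz n J x ∧ x.det = 1 ∧ b.det = 1 ∧ lowerTri n b ∧ g = x * wJ n J * b := by
  obtain ⟨B, b₂, hBd, hbd, hBl, hbl, hg⟩ := hB
  have hBu : IsUnit B.det := by rw [hBd]; exact isUnit_one
  have hwu : IsUnit (wJ n J).det := by rw [det_wJ]; exact isUnit_one
  have hbu : IsUnit b₂.det := by rw [hbd]; exact isUnit_one
  have hBi : lowerTri n B⁻¹ := lowerTri_inv hBl (by rw [hBd]; exact one_ne_zero)
  have hbi : lowerTri n b₂⁻¹ := lowerTri_inv hbl (by rw [hbd]; exact one_ne_zero)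
  -- reduce to `b₂ = 1`
  have hH2 : Hess ((wJ n J)⁻¹ * (B⁻¹ * fMat n * B) * wJ n J) := by
    have h1 := hess_conj hbi (by rw [Matrix.det_nonsing_inv, hbd]; simp) hH
    have h2 : g * b₂⁻¹ = B * wJ n J := by
      rw [hg, Matrix.mul_assoc, Matrix.mul_nonsing_inv _ hbu, Matrix.mul_one]
    rw [h2, Matrix.mul_inv_rev] at h1
    simpa only [Matrix.mul_assoc] using h1
  set N := B⁻¹ * fMat n * B with hN
  have hBN : B * N = fMat n * B := by
    rw [hN, Matrix.mul_assoc, ← Matrix.mul_assoc, Matrix.mul_nonsing_inv _ hBu, Matrix.one_mul]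
  have hN0 : ∀ p q : Fin n, blockStart n J p = blockStart n J q → q.1 + 1 < p.1 → N p q = 0 := by
    intro p q hpq hlt
    have h4 := be_eq_of_bs_eq _ _ hpq
    have a1 := tau_val (J := J) p
    have a2 := tau_val (J := J) q
    have := hH2 (tau n J p) (tau n J q) (by omega)
    rw [wJ_conj, tau_tau, tau_tau] at this
    simpa [sgn_ne] using this
  have hNl : ∀ p q : Fin n, p ≤ q → N p q = 0 := by
    intro p q hpq
    rw [hN, Matrix.mul_assoc, Matrix.mul_apply]
    refine Finset.sum_eq_zero (fun k _ => ?_)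
    rcases lt_or_ge p k with h | h
    · rw [hBi p k h, zero_mul]
    · rw [f_mul]
      split_ifs with h0
      · rw [hBl _ _ (by rw [Fin.lt_def]; rw [Fin.le_def] at *; simp; omega), mul_zero]
      · simp
  have hdiag : ∀ p, B p p ≠ 0 := by
    intro p
    rw [lowerTri_det hBl] at hBd
    have h0 : (∏ i, B i i) ≠ 0 := by rw [hBd]; exact one_ne_zero
    exact (Finset.prod_ne_zero_iff.1 h0) p (Finset.mem_univ p)
  -- recursion
  have hrec : ∀ p q (hp : p + 1 < n) (hq : q + 1 < n), q ≤ p →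
      blockStart n J ⟨p + 1, hp⟩ = blockStart n J ⟨q, by omega⟩ →
      B ⟨p, by omega⟩ ⟨q, by omega⟩ = B ⟨p+1, hp⟩ ⟨q+1, hq⟩ * N ⟨q+1, hq⟩ ⟨q, by omega⟩ := by
    intro p q hp hq hqp hbs
    have h1 : (fMat n * B) ⟨p+1, hp⟩ ⟨q, by omega⟩ = B ⟨p, by omega⟩ ⟨q, by omega⟩ := by
      rw [f_mul, dif_pos (by simp)]; simp
    rw [← h1, ← hBN, Matrix.mul_apply, Finset.sum_eq_single ⟨q+1, hq⟩]
    · intro k _ hk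
      rcases lt_or_ge (⟨p+1, hp⟩ : Fin n) k with h | h
      · rw [hBl _ _ h, zero_mul]
      rcases lt_or_ge (⟨q, by omega⟩ : Fin n) k with h' | h'
      · rw [Fin.le_def] at h; rw [Fin.lt_def] at h'
        have b1 := bs_mono (J := J) ⟨q, by omega⟩ k h'.le
        have b2 := bs_mono (J := J) k ⟨p+1, hp⟩ h
        have hk' : k.1 ≠ q + 1 := fun h => hk (by apply Fin.ext; simpa using h)
        simp at h'
        rw [hN0 k _ (by omega) (by simp; omega), mul_zero]
      · rw [hNl _ _ h', mul_zero]
    · simp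
  let x : Matrix (Fin n) (Fin n) ℂ := fun p q =>
    if blockStart n J p = blockStart n J q then B p q / B q q else 0
  have hxrec : ∀ p q (hp : p + 1 < n) (hq : q + 1 < n), q ≤ p →
      blockStart n J ⟨p + 1, hp⟩ = blockStart n J ⟨q, by omega⟩ →
      x ⟨p, by omega⟩ ⟨q, by omega⟩ = x ⟨p+1, hp⟩ ⟨q+1, hq⟩ := by
    intro p q hp hq hqp hbs
    have b1 := bs_mono (J := J) ⟨q, by omega⟩ ⟨p, by omega⟩ hqp
    have b2 := bs_mono (J := J) ⟨p, by omega⟩ ⟨p+1, hp⟩ (by simp)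
    have b3 := bs_mono (J := J) ⟨q, by omega⟩ ⟨q+1, hq⟩ (by simp)
    have b4 := bs_mono (J := J) ⟨q+1, hq⟩ ⟨p+1, hp⟩ (by simpa using hqp)
    have e1 := hrec p q hp hq hqp hbs
    have e2 := hrec q q hq hq le_rfl (by omega)
    have d1 := hdiag ⟨q, by omega⟩
    have d2 := hdiag ⟨q+1, hq⟩
    simp only [x]
    rw [if_pos (by omega), if_pos (by omega), e1]
    rw [e2] at d1 ⊢
    have d3 := right_ne_zero_of_mul d1
    field_simp
  have hxrec2 : ∀ k p q (hp : p + k < n) (hq : q + k < n), q ≤ p →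
      blockStart n J ⟨p + k, hp⟩ = blockStart n J ⟨q, by omega⟩ →
      x ⟨p, by omega⟩ ⟨q, by omega⟩ = x ⟨p+k, hp⟩ ⟨q+k, hq⟩ := by
    intro k
    induction k with
    | zero => intros; rfl
    | succ k ih =>
      intro p q hp hq hqp hbs
      have b1 := bs_mono (J := J) ⟨q, by omega⟩ ⟨p + k, by omega⟩ (by simp; omega)
      have b2 := bs_mono (J := J) ⟨p + k, by omega⟩ ⟨p + (k+1), hp⟩ (by simp)
      have b3 := bs_mono (J := J) ⟨q, by omega⟩ ⟨q + k, by omega⟩ (by simp)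
      have b4 := bs_mono (J := J) ⟨q + k, by omega⟩ ⟨p + (k+1), hp⟩ (by simp; omega)
      rw [ih p q (by omega) (by omega) hqp (by omega)]
      exact hxrec (p+k) (q+k) (by omega) (by omega) (by omega)
        (by simp only [Nat.add_assoc]; omega)
  have hxl : lowerTri n x := by
    intro i j hij
    simp only [x]; rw [hBl i j hij]; simp
  have hxd : x.det = 1 := by
    rw [lowerTri_det hxl]
    refine Finset.prod_eq_one (fun p _ => ?_)
    simp [x, hdiag]
  have hxu : IsUnit x.det := by rw [hxd]; exact isUnit_one
  have hxi : lowerTri n x⁻¹ := lowerTri_inv hxl (by rw [hxd]; exact one_ne_zero)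
  have hxT : IsJToeplitz n J x := by
    refine ⟨fun a k => if k = 0 then 1 else
      if h : a + k < n then x ⟨a + k, h⟩ ⟨a, by omega⟩ else 0, by simp, ?_⟩
    intro p q
    by_cases h : blockStart n J p = blockStart n J q ∧ q.1 ≤ p.1
    · rw [if_pos h]
      obtain ⟨h1, h2⟩ := h
      have hs := blockStart_le n J q
      by_cases h3 : p.1 - q.1 = 0
      · have : p = q := by apply Fin.ext; omega
        subst this
        simp [x, hdiag]
      · beta_reduce
        rw [if_neg h3, dif_pos (by omega)]
        have e := hxrec2 (q.1 - blockStart n J p) (blockStart n J p + (p.1 - q.1)) (blockStart n J p)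
          (by omega) (by omega) (by omega) (by
            have f1 : (⟨blockStart n J p + (p.1 - q.1) + (q.1 - blockStart n J p), by omega⟩ : Fin n) = p := by
              apply Fin.ext; simp; omega
            rw [f1]
            symm
            apply bs_eq_of_mem
            · simp
            · have := le_blockEnd n J p; simp; omega)
        rw [e]
        congr 1
        · apply Fin.ext; simp; omega
        · apply Fin.ext; simp; omega
    · rw [if_neg h]
      by_cases h1 : blockStart n J p = blockStart n J q
      · exact hxl p q (by
          rw [Fin.lt_def]
          by_contra hc
          exact h ⟨h1, by omega⟩)
      · simp [x, h1]
  -- off-block part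
  let R : Matrix (Fin n) (Fin n) ℂ := B - x * Matrix.diagonal (fun p => B p p)
  have hR : ∀ p q, blockStart n J p ≤ blockStart n J q → R p q = 0 := by
    intro p q hpq
    simp only [R, Matrix.sub_apply, Matrix.mul_diagonal]
    simp only [x]
    rcases hpq.lt_or_eq with h | h
    · have h5 := (bs_lt_iff p q).1 h
      have h6 := le_blockEnd n J p
      rw [if_neg (by omega), hBl p q (by rw [Fin.lt_def]; omega)]; simp
    · rw [if_pos h]
      have := hdiag q
      field_simp
      ring
  have hC : ∀ p q : Fin n, tau n J p < tau n J q → (x⁻¹ * B) p q = 0 := by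
    intro p q hpq
    have e : x⁻¹ * B = Matrix.diagonal (fun p => B p p) + x⁻¹ * R := by
      simp only [R]
      rw [Matrix.mul_sub, ← Matrix.mul_assoc, Matrix.nonsing_inv_mul _ hxu, Matrix.one_mul]
      abel
    have hne : p ≠ q := by rintro rfl; exact lt_irrefl _ hpq
    rw [e, Matrix.add_apply, Matrix.diagonal_apply_ne _ hne, lower_mul_R hxi hR, add_zero]
    by_contra hc
    push Not at hc
    exact absurd (tau_lt_of_bs_lt _ _ hc) (not_lt.2 hpq.le)
  refine ⟨x, (wJ n J)⁻¹ * (x⁻¹ * B) * wJ n J * b₂, hxT, hxd, ?_, ?_, ?_⟩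
  · simp only [Matrix.det_mul, Matrix.det_nonsing_inv, det_wJ, hxd, hBd, hbd]; simp
  · refine lowerTri_mul ?_ hbl
    intro p q hpq
    rw [wJ_conj, hC _ _ (by rw [tau_tau, tau_tau]; exact hpq)]; simp
  · rw [hg]
    simp only [← Matrix.mul_assoc]
    rw [Matrix.mul_nonsing_inv_cancel_right _ _ hwu, Matrix.mul_nonsing_inv _ hxu, Matrix.one_mul]

end main

/-- Corollary (description of the Richardson strata): for `K ⊆ J ⊆ [n-1]` and
`g ∈ SL_n(ℂ)`, `g` satisfies the Peterson condition and lies in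
`B⁺ ẇ_K B⁻ ∩ B⁻ ẇ_J B⁻` iff `g = x ẇ_J b` with `x` a `J`-Toeplitz matrix,
`b ∈ B⁻`, `Δ_i(x ẇ_J) = 0` for `i ∈ K` and `Δ_i(x ẇ_J) ≠ 0` for `i ∉ K`. -/
theorem richardson_stratum_description (n : ℕ) (hn : 2 ≤ n)
    (K J : Set (Fin (n-1))) (hKJ : K ⊆ J)
    (g : Matrix (Fin n) (Fin n) ℂ) (hdet : g.det = 1) :
    ((∀ i j : Fin n, (i : ℕ) + 1 < (j : ℕ) → (g⁻¹ * fMat n * g) i j = 0) ∧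
        inBruhatPlus n K g ∧ inBruhatMinus n J g) ↔
      (∃ x b : Matrix (Fin n) (Fin n) ℂ,
        IsJToeplitz n J x ∧ x.det = 1 ∧ b.det = 1 ∧ lowerTri n b ∧
        g = x * wJ n J * b ∧
        (∀ i, i ∈ K → Delta n (x * wJ n J) i = 0) ∧
        (∀ i, i ∉ K → Delta n (x * wJ n J) i ≠ 0)) := by
  have h1 : (1 : ℂ) ≠ 0 := one_ne_zero
  constructor
  · rintro ⟨hH, ⟨b₁, b₂, hd1, hd2, hb1, hb2, hg⟩, hM⟩
    obtain ⟨x, b, hx, hxd, hbd, hbl, hgx⟩ := toeplitz_of_bruhat hdet hH hM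
    have key : ∀ i, Delta n (x * wJ n J) i = 0 ↔ i ∈ K := by
      intro i
      rw [← Delta_mul_lower _ b i (by rw [hbd]; exact h1) hbl, ← hgx, hg,
        Delta_mul_lower _ b₂ i (by rw [hd2]; exact h1) hb2,
        Delta_upper_mul b₁ _ i (by rw [hd1]; exact h1) hb1, Delta_wJ]
    exact ⟨x, b, hx, hxd, hbd, hbl, hgx, fun i hi => (key i).2 hi,
      fun i hi h0 => hi ((key i).1 h0)⟩
  · rintro ⟨x, b, hx, hxd, hbd, hbl, hgx, hK1, hK2⟩
    have hH : Hess (g⁻¹ * fMat n * g) := by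
      rw [hgx]
      apply hess_conj hbl (by rw [hbd]; exact h1)
      have := toeplitz_hess hx hxd
      rw [Matrix.mul_inv_rev]
      simpa only [Matrix.mul_assoc] using this
    refine ⟨hH, bruhat_plus hdet hH (fun i => ?_), x, b, hxd, hbd, toeplitz_lower hx, hbl, hgx⟩
    rw [hgx, Delta_mul_lower _ b i (by rw [hbd]; exact h1) hbl]
    exact ⟨fun h => by_contra (fun hn' => hK2 i hn' h), hK1 i⟩

end PetersonPaper
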